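/- Let n ≥ 1, k ≥ 1, and let τ = (τ₀,…,τ_{k−1}) : (ℝⁿ)ᵏ → (ℝⁿ)ᵏ be k times continuously differentiable. Suppose the consistency identity holds for all z and u, and that B and B̂ are constant: B(z) ≡ B and B̂(ẑ) ≡ B̂, both diagonal with strictly positive diagonal entries. Set ΔB = B̂B⁻¹. Then there exists c ∈ ℝⁿ such that for all z ∈ (ℝⁿ)ᵏ: τ₀(z) = ΔB z₀ + c, and τ_i(z) = ΔB z_i for every 1 ≤ i ≤ k−1; that is, τ(z) = diag(ΔB,…,ΔB) z + (c,0,…,0). -/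

import Mathlib

/-!
Write `D = Bhat * B⁻¹`. Comparing the consistency identity for different `u` shows that the
derivative of `τ` in the direction of the last block is `(0, …, 0, D)`, while the rows `i < k - 1`
say `τ_{i+1}(z) = Dτ_i(z) (z₁, …, z_{k-1}, v)` for every `v`.

By downward induction on `j`, for `i ≤ j` the component `τ_i` is affine in the block `z_j`, with
linear part `D` if `i = j` and `0` if `i < j` (`shift_block`). Indeed, if `τ_i` does not depend on
`z_{j+1}`, then neither does `Dτ_i`, so the row identity makes `τ_{i+1}` affine in `z_{j+1}` with
linear part `∂_jτ_i`; this linear part is known from the previous step (`deriv_block_step`). Hence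
`τ₀(z) = D z₀ + c`, and the row identities then give `τ_{i+1}(z) = D z_{i+1}` for each `i` in turn.
-/

open Matrix

noncomputable section

/-- `shiftVec f last` is the vector `(f₁, …, f_{k-1}, last)` obtained from
`f = (f₀, …, f_{k-1})` by shifting the blocks and putting `last` in the last block. -/
def shiftVec {n k : ℕ} (f : Fin k → Fin n → ℝ) (last : Fin n → ℝ) : Fin k → Fin n → ℝ :=
  fun i => if h : (i : ℕ) + 1 < k then f ⟨(i : ℕ) + 1, h⟩ else last

/-- The consistency identity:
`(τ₁(z), …, τ_{k-1}(z), Fhat(τ(z)) + Bhat(τ(z))u) = Dτ(z) ⬝ (z₁, …, z_{k-1}, F(z) + B(z)u)`. -/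
def Consistent {n k : ℕ} (F Fhat : (Fin k → Fin n → ℝ) → Fin n → ℝ)
    (B Bhat : (Fin k → Fin n → ℝ) → Matrix (Fin n) (Fin n) ℝ)
    (τ : (Fin k → Fin n → ℝ) → Fin k → Fin n → ℝ) : Prop :=
  ∀ (z : Fin k → Fin n → ℝ) (u : Fin n → ℝ),
    shiftVec (τ z) (Fhat (τ z) + (Bhat (τ z)).mulVec u)
      = fderiv ℝ τ z (shiftVec z (F z + (B z).mulVec u))

lemma shiftVec_add_single {n k : ℕ} (z : Fin k → Fin n → ℝ) (v w : Fin n → ℝ) (j : ℕ)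
    (hj : j + 1 < k) :
    shiftVec (z + Pi.single ⟨j + 1, hj⟩ w) v
      = shiftVec z v + Pi.single ⟨j, Nat.lt_of_succ_lt hj⟩ w := by
  funext i
  by_cases h : (i : ℕ) + 1 < k <;> by_cases h' : (i : ℕ) = j
  · subst h'
    simp [shiftVec, h]
  · have h1 : i ≠ ⟨j, Nat.lt_of_succ_lt hj⟩ := fun e => h' (congrArg Fin.val e)
    have h2 : (⟨(i : ℕ) + 1, h⟩ : Fin k) ≠ ⟨j + 1, hj⟩ := by simpa using h'
    simp [shiftVec, h, Pi.single_eq_of_ne h1, Pi.single_eq_of_ne h2]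
  · omega
  · have h1 : i ≠ ⟨j, Nat.lt_of_succ_lt hj⟩ := fun e => h' (congrArg Fin.val e)
    simp [shiftVec, h, Pi.single_eq_of_ne h1]

lemma shiftVec_add_last {n k : ℕ} (hk : 0 < k) (z : Fin k → Fin n → ℝ) (v w : Fin n → ℝ) :
    shiftVec z (v + w) = shiftVec z v + Pi.single ⟨k - 1, Nat.sub_one_lt_of_lt hk⟩ w := by
  funext i
  by_cases h : (i : ℕ) + 1 < k
  · have h1 : i ≠ ⟨k - 1, Nat.sub_one_lt_of_lt hk⟩ := fun e => by
      have := congrArg Fin.val e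
      simp only at this
      omega
    simp [shiftVec, h, Pi.single_eq_of_ne h1]
  · have h1 : i = ⟨k - 1, Nat.sub_one_lt_of_lt hk⟩ := Fin.ext (by simp only; omega)
    subst h1
    simp [shiftVec, h]

lemma fderiv_component {n k : ℕ} {τ : (Fin k → Fin n → ℝ) → Fin k → Fin n → ℝ}
    (hτ : Differentiable ℝ τ) (z v : Fin k → Fin n → ℝ) (i : Fin k) :
    fderiv ℝ τ z v i = fderiv ℝ (fun y => τ y i) z v := by
  rw [(hasFDerivAt_pi'.1 (hτ z).hasFDerivAt i).fderiv]
  rfl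

/-- A function whose derivative along `v` is a constant `a` increases by `a` under translation
by `v`. -/
lemma add_of_fderiv_const {E G : Type*} [NormedAddCommGroup E] [NormedSpace ℝ E]
    [NormedAddCommGroup G] [NormedSpace ℝ G] {f : E → G} (hf : Differentiable ℝ f)
    {v : E} {a : G} (h : ∀ z, fderiv ℝ f z v = a) (z : E) : f (z + v) = f z + a := by
  have hd : ∀ t : ℝ, HasDerivAt (fun t : ℝ => f (z + t • v) - t • a) 0 t := by
    intro t
    have h1 : HasDerivAt (fun t : ℝ => z + t • v) v t := by
      simpa using ((hasDerivAt_id t).smul_const v).const_add z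
    have h2 := (hf (z + t • v)).hasFDerivAt.comp_hasDerivAt t h1
    rw [h] at h2
    have h3 : HasDerivAt (fun t : ℝ => t • a) a t := by
      simpa using (hasDerivAt_id t).smul_const a
    have h4 := h2.sub h3
    rw [sub_self] at h4
    exact h4
  have := is_const_of_deriv_eq_zero (fun t => (hd t).differentiableAt) (fun t => (hd t).deriv) 1 0
  simp only [one_smul, zero_smul, add_zero, sub_zero] at this
  exact sub_eq_iff_eq_add.1 this

/-- If `τ_i` is unaffected by the block `z_{j+1}`, the row identity for `τ_{i+1}` identifies the
derivative of `τ_i` along block `j` with the increment of `τ_{i+1}` along block `j + 1`. -/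
lemma deriv_block_step {n k : ℕ} {τ : (Fin k → Fin n → ℝ) → Fin k → Fin n → ℝ}
    (hτ : Differentiable ℝ τ)
    (hrow : ∀ z v (i : ℕ) (hi : i + 1 < k),
      τ z ⟨i + 1, hi⟩ = fderiv ℝ τ z (shiftVec z v) ⟨i, Nat.lt_of_succ_lt hi⟩)
    (i j : ℕ) (hi : i + 1 < k) (hj : j + 1 < k) (w : Fin n → ℝ)
    (hind : ∀ z, τ (z + Pi.single ⟨j + 1, hj⟩ w) ⟨i, Nat.lt_of_succ_lt hi⟩
      = τ z ⟨i, Nat.lt_of_succ_lt hi⟩) (z : Fin k → Fin n → ℝ) :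
    fderiv ℝ τ z (Pi.single ⟨j, Nat.lt_of_succ_lt hj⟩ w) ⟨i, Nat.lt_of_succ_lt hi⟩
      = τ (z + Pi.single ⟨j + 1, hj⟩ w) ⟨i + 1, hi⟩ - τ z ⟨i + 1, hi⟩ := by
  have hD : fderiv ℝ (fun y => τ y ⟨i, Nat.lt_of_succ_lt hi⟩) (z + Pi.single ⟨j + 1, hj⟩ w)
      = fderiv ℝ (fun y => τ y ⟨i, Nat.lt_of_succ_lt hi⟩) z := by
    rw [← fderiv_comp_add_right]
    exact congrArg (fun f => fderiv ℝ f z) (funext hind)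
  rw [hrow (z + _) 0 i hi, hrow z 0 i hi, shiftVec_add_single,
    fderiv_component hτ, fderiv_component hτ, fderiv_component hτ, hD, map_add]
  simp

/-- For `i ≤ j`, translating the block `j` by `w` adds `D w` to `τ_i` if `i = j` and leaves `τ_i`
unchanged if `i < j`. -/
lemma shift_block {n k : ℕ} {τ : (Fin k → Fin n → ℝ) → Fin k → Fin n → ℝ} (hk : 0 < k)
    (hτ : Differentiable ℝ τ) (D : Matrix (Fin n) (Fin n) ℝ)
    (hrow : ∀ z v (i : ℕ) (hi : i + 1 < k),
      τ z ⟨i + 1, hi⟩ = fderiv ℝ τ z (shiftVec z v) ⟨i, Nat.lt_of_succ_lt hi⟩)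
    (hlast : ∀ z w, fderiv ℝ τ z (Pi.single ⟨k - 1, Nat.sub_one_lt_of_lt hk⟩ w)
      = Pi.single ⟨k - 1, Nat.sub_one_lt_of_lt hk⟩ (D.mulVec w))
    (j : ℕ) (hj : j < k) (i : ℕ) (hij : i ≤ j) (z : Fin k → Fin n → ℝ) (w : Fin n → ℝ) :
    τ (z + Pi.single ⟨j, hj⟩ w) ⟨i, hij.trans_lt hj⟩
      = τ z ⟨i, hij.trans_lt hj⟩ + if i = j then D.mulVec w else 0 := by
  have hcomp : ∀ i : Fin k, Differentiable ℝ (fun y => τ y i) := differentiable_pi.1 hτ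
  -- Induction on the distance `d` of the block from the last one.
  obtain ⟨d, hd⟩ : ∃ d, j + d + 1 = k := ⟨k - 1 - j, by omega⟩
  induction d generalizing j i z w with
  | zero =>
    refine add_of_fderiv_const (hcomp _) (fun y => ?_) z
    obtain rfl : j = k - 1 := by omega
    rw [← fderiv_component hτ, hlast]
    by_cases h : i = k - 1
    · subst h
      simp
    · simp [h]
  | succ d ih =>
    have hj' : j + 1 < k := by omega
    have hi' : i + 1 < k := by omega
    refine add_of_fderiv_const (hcomp _) (fun y => ?_) z
    rw [← fderiv_component hτ]
    rw [deriv_block_step hτ hrow i j hi' hj' w, ih (j + 1) hj' (i + 1) (by omega) y w (by omega)]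
    · simp
    · intro y
      rw [ih (j + 1) hj' i (by omega) y w (by omega), if_neg (by omega), add_zero]

/-- A function of the blocks that is invariant under translating each single block is constant. -/
lemma const_of_single_invariant {n k : ℕ} {α : Type*} (g : (Fin k → Fin n → ℝ) → α)
    (h : ∀ j z w, g (z + Pi.single j w) = g z) (z : Fin k → Fin n → ℝ) : g z = g 0 := by
  have key : ∀ s : Finset (Fin k), g (∑ j ∈ s, Pi.single j (z j)) = g 0 := by
    intro s
    induction s using Finset.induction_on with
    | empty => simp
    | insert a s ha ih => rw [Finset.sum_insert ha, add_comm, h, ih]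
  simpa [Finset.univ_sum_single] using key Finset.univ

theorem stmt2 {n k : ℕ} (hn : 1 ≤ n) (hk : 0 < k)
    (F Fhat : (Fin k → Fin n → ℝ) → Fin n → ℝ)
    (B Bhat : Matrix (Fin n) (Fin n) ℝ)
    (hBdiag : B.IsDiag) (hBpos : ∀ a, 0 < B a a)
    (hBhatdiag : Bhat.IsDiag) (hBhatpos : ∀ a, 0 < Bhat a a)
    (τ : (Fin k → Fin n → ℝ) → Fin k → Fin n → ℝ)
    (hτ : ContDiff ℝ k τ)
    (hcons : Consistent F Fhat (fun _ => B) (fun _ => Bhat) τ) :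
    ∃ c : Fin n → ℝ, ∀ z : Fin k → Fin n → ℝ,
      τ z ⟨0, hk⟩ = (Bhat * B⁻¹).mulVec (z ⟨0, hk⟩) + c
      ∧ ∀ i : Fin k, 0 < (i : ℕ) → τ z i = (Bhat * B⁻¹).mulVec (z i) := by
  have hd : Differentiable ℝ τ := hτ.differentiable (by exact_mod_cast hk.ne')
  set D := Bhat * B⁻¹ with hDdef
  have hdet : IsUnit B.det := by
    rw [← hBdiag.diagonal_diag, det_diagonal, isUnit_iff_ne_zero]
    exact Finset.prod_ne_zero_iff.2 fun a _ => (hBpos a).ne'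
  -- As `B` is invertible, the last block of the direction is arbitrary: take `u = B⁻¹ (v - F z)`.
  have hgen : ∀ z v, shiftVec (τ z) (Fhat (τ z) + D.mulVec (v - F z))
      = fderiv ℝ τ z (shiftVec z v) := by
    intro z v
    have := hcons z (B⁻¹.mulVec (v - F z))
    simpa [hDdef, mulVec_mulVec, mul_nonsing_inv B hdet] using this
  have hrow : ∀ z v (i : ℕ) (hi : i + 1 < k),
      τ z ⟨i + 1, hi⟩ = fderiv ℝ τ z (shiftVec z v) ⟨i, Nat.lt_of_succ_lt hi⟩ := by
    intro z v i hi
    rw [← hgen]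
    simp [shiftVec, hi]
  have hlast : ∀ z w, fderiv ℝ τ z (Pi.single ⟨k - 1, Nat.sub_one_lt_of_lt hk⟩ w)
      = Pi.single ⟨k - 1, Nat.sub_one_lt_of_lt hk⟩ (D.mulVec w) := by
    intro z w
    have h1 := hgen z (F z + w)
    have h0 := hgen z (F z)
    rw [add_sub_cancel_left, shiftVec_add_last hk, shiftVec_add_last hk, map_add] at h1
    rw [sub_self, mulVec_zero, add_zero] at h0
    rw [h0] at h1
    exact (add_left_cancel h1).symm
  have hshift := shift_block hk hd D hrow hlast
  have hzero : ∀ z, τ z ⟨0, hk⟩ = D.mulVec (z ⟨0, hk⟩) + τ 0 ⟨0, hk⟩ := by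
    intro z
    have := const_of_single_invariant (fun z => τ z ⟨0, hk⟩ - D.mulVec (z ⟨0, hk⟩)) (by
      rintro ⟨j, hj⟩ z w
      simp only [hshift j hj 0 (Nat.zero_le j) z w, Pi.add_apply, mulVec_add]
      by_cases h : 0 = j
      · subst h
        simp
      · simp [h]) z
    simp only [Pi.zero_apply, mulVec_zero, sub_zero] at this
    rw [← this]
    abel
  -- A component of the form `D z_i + c` forces the next one to be `D z_{i+1}`.
  have hnext : ∀ (i : ℕ) (hi : i + 1 < k) (c : Fin n → ℝ),
      (∀ z, τ z ⟨i, Nat.lt_of_succ_lt hi⟩ = D.mulVec (z ⟨i, Nat.lt_of_succ_lt hi⟩) + c) →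
      ∀ z, τ z ⟨i + 1, hi⟩ = D.mulVec (z ⟨i + 1, hi⟩) := by
    intro i hi c h z
    let L : (Fin k → Fin n → ℝ) →L[ℝ] (Fin n → ℝ) :=
      D.mulVecLin.toContinuousLinearMap.comp
        (ContinuousLinearMap.proj ⟨i, Nat.lt_of_succ_lt hi⟩)
    have hL : (fun y => τ y ⟨i, Nat.lt_of_succ_lt hi⟩) = fun y => L y + c := funext h
    rw [hrow z 0 i hi, fderiv_component hd, hL, fderiv_add_const, L.fderiv]
    simp [L, shiftVec, hi]
  have hsucc : ∀ (i : ℕ) (hi : i + 1 < k) z, τ z ⟨i + 1, hi⟩ = D.mulVec (z ⟨i + 1, hi⟩) := by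
    intro i
    induction i with
    | zero => exact fun hi => hnext 0 hi _ hzero
    | succ i ih =>
      exact fun hi => hnext (i + 1) hi 0 fun z => by rw [ih (Nat.lt_of_succ_lt hi) z, add_zero]
  refine ⟨τ 0 ⟨0, hk⟩, fun z => ⟨hzero z, ?_⟩⟩
  rintro ⟨i, hi⟩ hpos
  obtain ⟨m, rfl⟩ : ∃ m, i = m + 1 := ⟨i - 1, by simp only at hpos; omega⟩
  exact hsucc m hi z
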